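/- There exist fixed natural numbers m and s such that there is no algorithm (no computable function) which, given arrays of integers a = (a^{i,j}_q) indexed by 1 ≤ i < j ≤ s and 1 ≤ q ≤ m, and b = (b_1,…,b_m), decides whether there exist integers x_1,…,x_s, y_1,…,y_s satisfying ∑_{1 ≤ i < j ≤ s} 2·a^{i,j}_q · (x_i y_j − x_j y_i) = b_q for every 1 ≤ q ≤ m. Formally: there exist m, s such that the predicate (SKEW') on pairs (a,b) is not a computable predicate with respect to the standard encoding of finite integer arrays. -/

import Mathlib

/-- The property (SKEW'): there are integers `x 1, …, x s, y 1, …, y s` such that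
`∑_{1 ≤ i < j ≤ s} 2 * a q i j * (x i * y j - x j * y i) = b q` for every `q`. -/
def SKEW' (m s : ℕ) (a : Fin m → Fin s → Fin s → ℤ) (b : Fin m → ℤ) : Prop :=
  ∃ x y : Fin s → ℤ, ∀ q : Fin m,
    (∑ i : Fin s, ∑ j : Fin s,
      if i < j then 2 * a q i j * (x i * y j - x j * y i) else 0) = b q

/-!
Matiyasevich's theorem that exponentiation is Diophantine makes binomial coefficients and factorials
Diophantine: `n.choose k` is a digit of `(b + 1) ^ n` in a large base `b`, and `n !` is the integer
part of `r ^ n / r.choose n` for large `r`. With the Chinese remainder theorem this eliminates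
bounded universal quantifiers, so that graphs of partial recursive functions, and with them all
recursively enumerable sets, are Diophantine. Hence for some integer polynomial `P` it is
undecidable, given `n`, whether `P` has an integral zero with a prescribed coordinate equal to `n`.

Such a zero `z` is encoded by its vector `ζ` of monomials of bounded degree: that it is one, and
that `P` vanishes at `z`, is expressed by linear equations in the products `ζ i * ζ j` alone. A
symmetric rank-one matrix `ζ ζᵀ` is in turn an off-diagonal block of a matrix of `2 × 2` minors
`x i * y j - x j * y i`, and the Plücker relations show that linear equations suffice to single out
the pairs `(x, y)` with such a block. Only the right-hand sides of the resulting skew-symmetric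
bilinear system depend on `n`.
-/

namespace SkewUndecidability

section Diophantine

open Dioph
open scoped Nat Vector3

/-! ### Binomial coefficients and factorials are Diophantine -/

theorem add_one_pow_div_pow_mod_eq_choose {n b : ℕ} (hb : 2 ^ n < b) (k : ℕ) :
    (b + 1) ^ n / b ^ k % b = n.choose k := by
  let L := List.ofFn fun i : Fin (n + 1) => n.choose i
  have hone : 1 < b := Nat.one_le_two_pow.trans_lt hb
  have hL : Nat.ofDigits b L = (b + 1) ^ n := by
    rw [Nat.ofDigits_eq_sum_mapIdx, List.mapIdx_eq_ofFn, List.sum_ofFn, add_pow, Finset.sum_range]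
    refine Fintype.sum_equiv (finCongr (List.length_ofFn)) _ _ fun i => ?_
    simp [L, mul_comm, -List.ofFn_succ]
  have hdigits : Nat.digits b ((b + 1) ^ n) = L := by
    rw [← hL]
    refine Nat.digits_ofDigits b hone L ?_ ?_
    · simp only [L, List.forall_mem_ofFn_iff]
      exact fun i => (Nat.choose_le_two_pow n i).trans_lt hb
    · intro h
      simp only [L, List.getLast_ofFn]
      simp
  rw [← Nat.getD_digits _ _ hone, hdigits]
  rcases le_or_gt k n with hk | hk
  · simp [L, List.getD, Nat.lt_succ_of_le hk, -List.ofFn_succ]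
  · simp [L, List.getD, Nat.choose_eq_zero_of_lt hk, hk]

theorem choose_dioph {α : Type} {f g : (α → ℕ) → ℕ} (df : DiophFn f) (dg : DiophFn g) :
    DiophFn fun v => (f v).choose (g v) := by
  have db : DiophFn fun v => 2 ^ f v + 1 := pow_dioph (D.2) df D+ D.1
  have h := pow_dioph (db D+ D.1) df D/ pow_dioph db dg D% db
  simpa only [Function.const, add_one_pow_div_pow_mod_eq_choose (Nat.lt_succ_self _)] using h

theorem pow_mul_le_descFactorial_mul_add {r n : ℕ} (h : n ≤ r) :
    r ^ n * r ≤ r.descFactorial n * r + n ^ 2 * r ^ n := by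
  rcases r.eq_zero_or_pos with rfl | hr
  · simp
  have hr' : (0 : ℚ) < r := by exact_mod_cast hr
  have bernoulli : 1 + (n : ℚ) * (-(n / r)) ≤ (1 + -(n / r)) ^ n := by
    refine one_add_mul_le_pow ?_ n
    have : (n : ℚ) / r ≤ 1 := div_le_one_of_le₀ (by exact_mod_cast h) hr'.le
    linarith
  have hdesc : ((r : ℚ) - n) ^ n ≤ r.descFactorial n := by
    rw [← Nat.cast_sub h]
    exact_mod_cast (Nat.pow_le_pow_left (by omega) n).trans (Nat.pow_sub_le_descFactorial r n)
  have : (r : ℚ) ^ n * r ≤ r.descFactorial n * r + n ^ 2 * r ^ n := by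
    calc (r : ℚ) ^ n * r = r ^ n * r * (1 + n * (-(n / r))) + n ^ 2 * r ^ n := by field_simp; ring
      _ ≤ r ^ n * r * (1 + -(n / r)) ^ n + n ^ 2 * r ^ n := by gcongr
      _ = (r - n) ^ n * r + n ^ 2 * r ^ n := by
        rw [show (r - n : ℚ) = r * (1 + -(n / r)) by field_simp; ring, mul_pow]; ring
      _ ≤ _ := by gcongr
  exact_mod_cast this

theorem pow_div_choose_eq_factorial {n r : ℕ} (hr : (n ! + 1) * n ^ 2 + n < r) :
    r ^ n / r.choose n = n ! := by
  have hpos : 0 < r ^ n := Nat.pow_pos (by omega)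
  have hlower := pow_mul_le_descFactorial_mul_add (show n ≤ r by omega)
  have hdesc : n ! * r.choose n = r.descFactorial n :=
    (Nat.descFactorial_eq_factorial_mul_choose r n).symm
  refine Nat.div_eq_of_lt_le (hdesc.trans_le (Nat.descFactorial_le_pow r n)) ?_
  by_contra! hcon
  have hsum : n ! * (r ^ n * r) + r * r ^ n ≤
      n ! * (r ^ n * r) + (n ! + 1) * n ^ 2 * r ^ n := by
    calc n ! * (r ^ n * r) + r * r ^ n = (n ! + 1) * (r ^ n * r) := by ring
      _ ≤ (n ! + 1) * (n ! * r.choose n * r + n ^ 2 * r ^ n) := by rw [hdesc]; gcongr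
      _ = n ! * ((n ! + 1) * r.choose n * r) + (n ! + 1) * n ^ 2 * r ^ n := by ring
      _ ≤ n ! * (r ^ n * r) + (n ! + 1) * n ^ 2 * r ^ n := by gcongr
  have := Nat.le_of_mul_le_mul_right (Nat.le_of_add_le_add_left hsum) hpos
  omega

theorem factorial_dioph {α : Type} {f : (α → ℕ) → ℕ} (df : DiophFn f) :
    DiophFn fun v => (f v) ! := by
  have dr : DiophFn fun v => (f v ^ f v + 1) * f v ^ 2 + f v + 1 :=
    (pow_dioph df df D+ D.1) D* pow_dioph df (D.2) D+ df D+ D.1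
  have formula (n : ℕ) : ((n ^ n + 1) * n ^ 2 + n + 1) ^ n /
      ((n ^ n + 1) * n ^ 2 + n + 1).choose n = n ! := by
    refine pow_div_choose_eq_factorial (Nat.lt_succ_of_le ?_)
    gcongr
    exact Nat.factorial_le_pow n
  simpa only [formula] using pow_dioph dr df D/ choose_dioph dr df

theorem descFactorial_dioph {α : Type} {f g : (α → ℕ) → ℕ} (df : DiophFn f) (dg : DiophFn g) :
    DiophFn fun v => (f v).descFactorial (g v) := by
  simpa only [Nat.descFactorial_eq_factorial_mul_choose] using
    factorial_dioph dg D* choose_dioph df dg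

theorem forall_dioph {α ι : Type} [Finite ι] {S : ι → Set (α → ℕ)} (d : ∀ i, Dioph (S i)) :
    Dioph {v | ∀ i, v ∈ S i} := by
  have := Fintype.ofFinite ι
  refine (DiophList.forall (Finset.univ.toList.map S) ?_).ext fun v => ?_ <;>
    simp [List.forall_iff_forall_mem, d]

/-! ### Bounded universal quantifiers are Diophantine -/

theorem poly_modEq {γ : Type} (p : Poly γ) {M : ℕ} {v w : γ → ℕ}
    (h : ∀ i, v i ≡ w i [MOD M]) : p v ≡ p w [ZMOD M] := by
  induction p using Poly.induction with
  | H1 i => exact Int.natCast_modEq_iff.2 (h i)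
  | H2 n => rfl
  | H3 p q hp hq => exact hp.sub hq
  | H4 p q hp hq => exact hp.mul hq

theorem exists_poly_abs_le {γ : Type} (p : Poly γ) :
    ∃ g : Poly γ, ∀ v w : γ → ℕ, v ≤ w → |p v| ≤ g w := by
  induction p using Poly.induction with
  | H1 i => exact ⟨Poly.proj i, fun v w h => by simpa using h i⟩
  | H2 n => exact ⟨Poly.const |n|, fun v w _ => le_rfl⟩
  | H3 p q hp hq =>
    obtain ⟨g, hg⟩ := hp
    obtain ⟨h, hh⟩ := hq
    exact ⟨g + h, fun v w hvw => (abs_sub _ _).trans (add_le_add (hg v w hvw) (hh v w hvw))⟩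
  | H4 p q hp hq =>
    obtain ⟨g, hg⟩ := hp
    obtain ⟨h, hh⟩ := hq
    refine ⟨g * h, fun v w hvw => (abs_mul _ _).trans_le ?_⟩
    exact mul_le_mul (hg v w hvw) (hh v w hvw) (abs_nonneg _) ((abs_nonneg _).trans (hg v w hvw))

theorem exists_mvPolynomial_eval_eq {γ : Type} (p : Poly γ) :
    ∃ P : MvPolynomial γ ℤ, ∀ v : γ → ℕ, P.eval (fun i => (v i : ℤ)) = p v := by
  induction p using Poly.induction with
  | H1 i => exact ⟨MvPolynomial.X i, fun v => by simp⟩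
  | H2 n => exact ⟨MvPolynomial.C n, fun v => by simp⟩
  | H3 p q hp hq =>
    obtain ⟨P, hP⟩ := hp
    obtain ⟨Q, hQ⟩ := hq
    exact ⟨P - Q, fun v => by simp [hP, hQ]⟩
  | H4 p q hp hq =>
    obtain ⟨P, hP⟩ := hp
    obtain ⟨Q, hQ⟩ := hq
    exact ⟨P * Q, fun v => by simp [hP, hQ]⟩

theorem exists_finset_poly_congr {γ : Type} (p : Poly γ) :
    ∃ s : Finset γ, ∀ v w : γ → ℕ, (∀ i ∈ s, v i = w i) → p v = p w := by
  obtain ⟨P, hP⟩ := exists_mvPolynomial_eval_eq p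
  refine ⟨P.vars, fun v w h => ?_⟩
  rw [← hP, ← hP]
  exact MvPolynomial.eval₂Hom_congr' rfl (fun i hi _ => by rw [h i hi]) rfl

theorem exists_poly_finite_dummies {α : Type} {S : Set (α → ℕ)} (d : Dioph S) :
    ∃ (β : Type) (_ : Finite β) (p : Poly (α ⊕ β)),
      ∀ v, v ∈ S ↔ ∃ t, p (Sum.elim v t) = 0 := by
  classical
  obtain ⟨β, p, hp⟩ := d
  obtain ⟨s, hs⟩ := exists_finset_poly_congr p
  let s' : Finset β := s.preimage Sum.inr Sum.inr_injective.injOn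
  -- all dummies that do not occur in `p` are identified with `none`
  let collapse : β → Option s' := fun b => if h : b ∈ s' then some ⟨b, h⟩ else none
  refine ⟨Option s', inferInstance, p.map (Sum.map id collapse), fun v => (hp v).trans ⟨?_, ?_⟩⟩
  · rintro ⟨t, ht⟩
    refine ⟨Option.elim' 0 (t ∘ (↑)), (hs _ _ ?_).trans ht⟩
    rintro (a | b) hi
    · rfl
    · have hb : b ∈ s' := by simpa [s'] using hi
      simp [collapse, hb]
  · rintro ⟨t, ht⟩
    refine ⟨t ∘ collapse, ?_⟩
    simpa [Sum.elim_comp_map] using ht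

/-- Pairwise coprime moduli for `k < Q`, used for encoding finite sequences by the Chinese remainder
theorem. Unlike those of `Nat.beta`, the first `n` of them have the closed-form product
`(Q ! ^ 2 + n).choose n`, and all their prime factors exceed `Q`. -/
def modulus (Q k : ℕ) : ℕ := Q ! ^ 2 / (k + 1) + 1

section modulus

variable {Q k n : ℕ}

theorem succ_mul_modulus (hk : k < Q) : (k + 1) * modulus Q k = Q ! ^ 2 + (k + 1) := by
  have hdvd : k + 1 ∣ Q ! ^ 2 := dvd_pow (Nat.dvd_factorial k.succ_pos hk) two_ne_zero
  rw [modulus, mul_add_one, Nat.mul_div_cancel' hdvd]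

theorem one_lt_modulus (hk : k < Q) : 1 < modulus Q k := by
  have hdvd : k + 1 ∣ Q ! ^ 2 := dvd_pow (Nat.dvd_factorial k.succ_pos hk) two_ne_zero
  exact Nat.succ_lt_succ (Nat.div_pos (Nat.le_of_dvd (by positivity) hdvd) k.succ_pos)

theorem lt_of_prime_dvd_modulus {p : ℕ} (hk : k < Q) (hp : p.Prime) (hd : p ∣ modulus Q k) :
    Q < p := by
  by_contra! hle
  have hfac : p ∣ Q ! ^ 2 / (k + 1) := by
    rw [sq, Nat.mul_div_assoc _ (Nat.dvd_factorial k.succ_pos hk)]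
    exact (hp.dvd_factorial.2 hle).mul_right _
  exact hp.not_dvd_one ((Nat.dvd_add_right hfac).1 hd)

theorem modulus_dvd_add (hk : k < Q) : modulus Q k ∣ k + (Q ! ^ 2 + 1) := by
  refine Dvd.intro_left (k + 1) ?_
  rw [succ_mul_modulus hk]
  ring

theorem modEq_of_dvd_modulus {d c : ℕ} (hk : k < Q) (hd : d ∣ modulus Q k)
    (hc : d ∣ c + (Q ! ^ 2 + 1)) : c ≡ k [MOD d] :=
  Nat.ModEq.add_right_cancel' (Q ! ^ 2 + 1)
    (hc.modEq_zero_nat.trans (hd.trans (modulus_dvd_add hk)).modEq_zero_nat.symm)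

theorem pairwise_coprime_modulus (hn : n ≤ Q) :
    (Finset.range n : Set ℕ).Pairwise (Function.onFun Nat.Coprime (modulus Q)) := by
  intro k hk l hl hkl
  simp only [Finset.coe_range, Set.mem_Iio] at hk hl
  refine Nat.coprime_of_dvd fun p hp hpk hpl => hkl ?_
  have hQp := lt_of_prime_dvd_modulus (hk.trans_le hn) hp hpk
  have hmod : l ≡ k [MOD p] :=
    modEq_of_dvd_modulus (hk.trans_le hn) hpk (hpl.trans (modulus_dvd_add (hl.trans_le hn)))
  exact (hmod.eq_of_lt_of_lt (by omega) (by omega)).symm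

theorem prod_modulus (hn : n ≤ Q) :
    ∏ k ∈ Finset.range n, modulus Q k = (Q ! ^ 2 + n).choose n := by
  refine Nat.eq_of_mul_eq_mul_left (Nat.factorial_pos n) ?_
  rw [← Nat.ascFactorial_eq_factorial_mul_choose]
  induction n with
  | zero => simp
  | succ n ih =>
    rw [Finset.prod_range_succ, Nat.factorial_succ, Nat.ascFactorial_succ, ← ih (by omega)]
    calc (n + 1) * n ! * ((∏ k ∈ Finset.range n, modulus Q k) * modulus Q n)
        = ((n + 1) * modulus Q n) * (n ! * ∏ k ∈ Finset.range n, modulus Q k) := by ring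
      _ = _ := by rw [succ_mul_modulus hn]; ring

theorem prod_modulus_dvd {X : ℕ} (hn : n ≤ Q) (h : ∀ k < n, modulus Q k ∣ X) :
    ∏ k ∈ Finset.range n, modulus Q k ∣ X :=
  Finset.prod_dvd_of_isRelPrime
    (fun _ hk _ hl hkl => Nat.coprime_iff_isRelPrime.1 (pairwise_coprime_modulus hn hk hl hkl))
    fun k hk => h k (Finset.mem_range.1 hk)

theorem exists_modEq_modulus (hn : n ≤ Q) (t : ℕ → ℕ) :
    ∃ x, ∀ k < n, x ≡ t k [MOD modulus Q k] := by
  obtain ⟨x, hx⟩ := Nat.chineseRemainderOfFinset t (modulus Q) (Finset.range n)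
    (fun _ _ => Nat.succ_ne_zero _) (pairwise_coprime_modulus hn)
  exact ⟨x, fun k hk => hx k (Finset.mem_range.2 hk)⟩

end modulus

theorem dvd_descFactorial_of_modEq {M a y u : ℕ} (hy : y ≤ u) (h : a ≡ y [MOD M]) :
    M ∣ a.descFactorial (u + 1) := by
  rcases lt_or_ge a y with hlt | hge
  · rw [Nat.descFactorial_of_lt (by omega)]
    exact dvd_zero M
  · rw [Nat.descFactorial_eq_prod_range]
    exact ((Nat.modEq_iff_dvd' hge).1 h.symm).trans
      (Finset.dvd_prod_of_mem _ (Finset.mem_range.2 (Nat.lt_succ_of_le hy)))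

theorem mod_le_of_prime_dvd_descFactorial {p a u : ℕ} (hp : p.Prime)
    (h : p ∣ a.descFactorial (u + 1)) : a % p ≤ u := by
  rw [Nat.descFactorial_eq_prod_range, hp.prime.dvd_finsetProd_iff] at h
  obtain ⟨j, hj, hd⟩ := h
  have hju : j ≤ u := Nat.le_of_lt_succ (Finset.mem_range.1 hj)
  rcases lt_or_ge a j with hlt | hge
  · exact (Nat.mod_le a p).trans (hlt.le.trans hju)
  · rw [← (Nat.modEq_iff_dvd' hge).2 hd]
    exact (Nat.mod_le j p).trans hju

/-- Certificate that for all `k < w none` the equation `p (k, w ∘ some, t) = 0` is solvable in `t`.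
The natural numbers `a i` and `c` encode, by their residues modulo `modulus Q k` for `k < w none`,
the `i`-th coordinate of a solution bounded by `u` and the number `k` itself; `g` is meant to be a
monotone bound for `|p|`. -/
def BallCert {α β : Type} (p g : Poly (Option α ⊕ β)) (w : Option α → ℕ) (a : β → ℕ)
    (u c : ℕ) : Prop :=
  let Q := (g (Sum.elim w fun _ => u)).natAbs + w none
  let M := ∏ k ∈ Finset.range (w none), modulus Q k
  M ∣ c + (Q ! ^ 2 + 1) ∧ (∀ i, M ∣ (a i).descFactorial (u + 1)) ∧
    M ∣ (p (Sum.elim (Option.elim' c (w ∘ some)) a)).natAbs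

theorem exists_ballCert {α β : Type} [Finite β] (p g : Poly (Option α ⊕ β)) {w : Option α → ℕ}
    (h : ∀ k < w none, ∃ t, p (Sum.elim (Option.elim' k (w ∘ some)) t) = 0) :
    ∃ a u c, BallCert p g w a u c := by
  choose! t ht using h
  obtain ⟨u, hu⟩ : ∃ u, ∀ k < w none, ∀ i, t k i ≤ u := by
    have hfin : ((fun x : ℕ × β => t x.1 x.2) '' (Set.Iio (w none) ×ˢ Set.univ)).Finite :=
      ((Set.finite_Iio _).prod Set.finite_univ).image _
    obtain ⟨u, hu⟩ := hfin.bddAbove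
    exact ⟨u, fun k hk i => hu ⟨(k, i), ⟨hk, trivial⟩, rfl⟩⟩
  have hn : w none ≤ (g (Sum.elim w fun _ => u)).natAbs + w none := Nat.le_add_left _ _
  choose a ha using fun i => exists_modEq_modulus hn (t · i)
  obtain ⟨c, hc⟩ := exists_modEq_modulus hn id
  refine ⟨a, u, c, prod_modulus_dvd hn fun k hk => ?_,
    fun i => prod_modulus_dvd hn fun k hk => ?_, prod_modulus_dvd hn fun k hk => ?_⟩
  · exact (((hc k hk).add_right _).dvd_iff dvd_rfl).2 (modulus_dvd_add (hk.trans_le hn))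
  · exact dvd_descFactorial_of_modEq (hu k hk i) (ha i k hk)
  · rw [← Int.natCast_dvd, ← Int.modEq_zero_iff_dvd, ← ht k hk]
    refine poly_modEq p ?_
    rintro ((_ | _) | i)
    exacts [hc k hk, rfl, ha i k hk]

theorem exists_eq_zero_of_ballCert {α β : Type} {p g : Poly (Option α ⊕ β)}
    (hg : ∀ v w, v ≤ w → |p v| ≤ g w) {w : Option α → ℕ} {a : β → ℕ} {u c : ℕ}
    (h : BallCert p g w a u c) {k : ℕ} (hk : k < w none) :
    ∃ t, p (Sum.elim (Option.elim' k (w ∘ some)) t) = 0 := by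
  obtain ⟨hc, ha, hp⟩ := h
  have hkQ := hk.trans_le (Nat.le_add_left _ (g (Sum.elim w fun _ => u)).natAbs)
  obtain ⟨q, hq, hqk⟩ := Nat.exists_prime_and_dvd (one_lt_modulus hkQ).ne'
  have hQq := lt_of_prime_dvd_modulus hkQ hq hqk
  have hqM := hqk.trans (Finset.dvd_prod_of_mem _ (Finset.mem_range.2 hk))
  -- modulo `q`, the residues of `a` are a solution; it is exact because `q` exceeds the bound `g`
  let t : β → ℕ := fun i => a i % q
  refine ⟨t, ?_⟩
  have hdvd : (q : ℤ) ∣ p (Sum.elim (Option.elim' k (w ∘ some)) t) := by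
    refine (Int.ModEq.dvd_iff (poly_modEq p ?_)).1 (Int.natCast_dvd.2 (hqM.trans hp))
    rintro ((_ | _) | i)
    exacts [modEq_of_dvd_modulus hkQ hqk (hqM.trans hc), rfl, (Nat.mod_modEq _ _).symm]
  have hle : |p (Sum.elim (Option.elim' k (w ∘ some)) t)| ≤ g (Sum.elim w fun _ => u) := by
    refine hg _ _ ?_
    rintro ((_ | _) | i)
    exacts [hk.le, le_rfl, mod_le_of_prime_dvd_descFactorial hq (hqM.trans (ha i))]
  exact Int.eq_zero_of_abs_lt_dvd hdvd (by omega)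

theorem ballCert_dioph {α β : Type} [Finite β] (p g : Poly (Option α ⊕ β)) :
    Dioph {w : Option α → ℕ | ∃ a u c, BallCert p g w a u c} := by
  let σg : Option α ⊕ β → Option α ⊕ (β ⊕ Fin 2) := Sum.map id fun _ => Sum.inr 0
  let σp : Option α ⊕ β → Option α ⊕ (β ⊕ Fin 2) :=
    Sum.elim (Option.elim' (Sum.inr (Sum.inr 1)) (Sum.inl ∘ some)) (Sum.inr ∘ Sum.inl)
  have hn := proj_dioph (Sum.inl none : Option α ⊕ (β ⊕ Fin 2))
  have hu := proj_dioph (Sum.inr (Sum.inr 0) : Option α ⊕ (β ⊕ Fin 2))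
  have hc := proj_dioph (Sum.inr (Sum.inr 1) : Option α ⊕ (β ⊕ Fin 2))
  have hQ := abs_poly_dioph (g.map σg) D+ hn
  have hZ := pow_dioph (factorial_dioph hQ) (D.2)
  have hM := choose_dioph (hZ D+ hn) hn
  have h₁ := hM D∣ hc D+ (hZ D+ D.1)
  have h₂ := forall_dioph fun i =>
    hM D∣ descFactorial_dioph (proj_dioph (Sum.inr (Sum.inl i))) (hu D+ D.1)
  have h₃ := hM D∣ abs_poly_dioph (p.map σp)
  refine (ex_dioph (h₁.inter (h₂.inter h₃))).ext fun w => ?_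
  have hM' (u : ℕ) := prod_modulus
    (Nat.le_add_left (w none) (g (Sum.elim w fun _ => u)).natAbs)
  simp only [BallCert, hM', Set.mem_ofPred_eq, Set.mem_inter_iff]
  have hσg (x : β ⊕ Fin 2 → ℕ) : Sum.elim w x ∘ σg = Sum.elim w fun _ => x (Sum.inr 0) := by
    ext (_ | _) <;> rfl
  have hσp (x : β ⊕ Fin 2 → ℕ) :
      Sum.elim w x ∘ σp = Sum.elim (Option.elim' (x (Sum.inr 1)) (w ∘ some)) (x ∘ Sum.inl) := by
    ext ((_ | _) | _) <;> rfl
  simp only [Poly.map_apply, Sum.elim_inl, Sum.elim_inr, Function.const, hσg, hσp]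
  exact ⟨fun ⟨x, h⟩ => ⟨x ∘ Sum.inl, x (Sum.inr 0), x (Sum.inr 1), h⟩,
    fun ⟨a, u, c, h⟩ => ⟨Sum.elim a ![u, c], h⟩⟩

theorem ball_dioph {α : Type} {S : Set (Option α → ℕ)} (d : Dioph S) {f : (α → ℕ) → ℕ}
    (df : DiophFn f) : Dioph {v : α → ℕ | ∀ k < f v, Option.elim' k v ∈ S} := by
  obtain ⟨β, _, p, hp⟩ := exists_poly_finite_dummies d
  obtain ⟨g, hg⟩ := exists_poly_abs_le p
  refine (diophFn_comp1 (ballCert_dioph p g) df).ext fun v => ?_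
  simp only [Set.mem_ofPred_eq, hp]
  exact ⟨fun ⟨a, u, c, h⟩ k hk => exists_eq_zero_of_ballCert hg h hk,
    fun h => exists_ballCert p g h⟩

/-! ### Recursively enumerable sets are Diophantine -/

theorem last_dioph {α : Type} : DiophFn fun w : Option α → ℕ => w none :=
  proj_dioph none

section unpair

variable {α : Type} {f g : (α → ℕ) → ℕ} (df : DiophFn f) (dg : DiophFn g)

include df

theorem lift_dioph : DiophFn fun w : Option α → ℕ => f (w ∘ some) :=
  reindex_diophFn some df

include dg in
theorem pair_dioph : DiophFn fun v => Nat.pair (f v) (g v) := by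
  have df' := lift_dioph df
  have dg' := lift_dioph dg
  refine Dioph.ext (((df' D< dg').inter (dg' D* dg' D+ df' D= last_dioph)).union
    ((dg' D≤ df').inter (df' D* df' D+ df' D+ dg' D= last_dioph))) fun w => ?_
  simp only [Set.mem_union, Set.mem_inter_iff, Set.mem_ofPred_eq, Nat.pair]
  split_ifs with h
  · simp [h, h.not_ge]
  · simp [h, not_lt.1 h]

theorem unpair_fst_dioph : DiophFn fun v => (f v).unpair.1 := by
  refine Dioph.ext (ex1_dioph
    (pair_dioph (lift_dioph last_dioph) last_dioph D= lift_dioph (lift_dioph df))) fun w => ?_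
  change (∃ z, Nat.pair (w none) z = f (w ∘ some)) ↔ (f (w ∘ some)).unpair.1 = w none
  exact ⟨fun ⟨z, hz⟩ => by rw [← hz, Nat.unpair_pair],
    fun h => ⟨(f (w ∘ some)).unpair.2, by rw [← h, Nat.pair_unpair]⟩⟩

theorem unpair_snd_dioph : DiophFn fun v => (f v).unpair.2 := by
  refine Dioph.ext (ex1_dioph
    (pair_dioph last_dioph (lift_dioph last_dioph) D= lift_dioph (lift_dioph df))) fun w => ?_
  change (∃ z, Nat.pair z (w none) = f (w ∘ some)) ↔ (f (w ∘ some)).unpair.2 = w none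
  exact ⟨fun ⟨z, hz⟩ => by rw [← hz, Nat.unpair_pair],
    fun h => ⟨(f (w ∘ some)).unpair.1, by rw [← h, Nat.pair_unpair]⟩⟩

include dg in
theorem beta_dioph : DiophFn fun v => Nat.beta (f v) (g v) :=
  unpair_fst_dioph df D% ((dg D+ D.1) D* unpair_snd_dioph df D+ D.1)

end unpair

theorem mem_natRec_iff_exists_seq {f g : ℕ →. ℕ} {a n y : ℕ} :
    y ∈ (Nat.rec (f a) (fun k ih => ih.bind fun i => g (Nat.pair a (Nat.pair k i))) n : Part ℕ) ↔
      ∃ t : ℕ → ℕ, t 0 ∈ f a ∧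
        (∀ k < n, t (k + 1) ∈ g (Nat.pair a (Nat.pair k (t k)))) ∧ y = t n := by
  induction n generalizing y with
  | zero => exact ⟨fun h => ⟨fun _ => y, h, by simp, rfl⟩, fun ⟨_, h, _, hy⟩ => hy ▸ h⟩
  | succ n ih =>
    refine Part.mem_bind_iff.trans ⟨?_, ?_⟩
    · rintro ⟨i, hi, hy⟩
      obtain ⟨t, ht₀, ht, rfl⟩ := ih.1 hi
      refine ⟨Function.update t (n + 1) y, by simpa using ht₀, fun k hk => ?_, by simp⟩
      rcases Nat.lt_succ_iff_lt_or_eq.1 hk with hk | rfl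
      · rw [Function.update_of_ne (by omega), Function.update_of_ne (by omega)]
        exact ht k hk
      · rwa [Function.update_self, Function.update_of_ne (by omega)]
    · rintro ⟨t, ht₀, ht, rfl⟩
      exact ⟨t n, ih.2 ⟨t, ht₀, fun k hk => ht k (by omega), rfl⟩, ht n (by omega)⟩

theorem exists_beta_eq (t : ℕ → ℕ) (n : ℕ) : ∃ s, ∀ k ≤ n, Nat.beta s k = t k := by
  let l : List ℕ := (List.range (n + 1)).map t
  refine ⟨Nat.unbeta l, fun k hk => ?_⟩
  simpa [l] using Nat.beta_unbeta_coe l ⟨k, by simp [l]; omega⟩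

theorem mem_natRec_iff_exists_beta {f g : ℕ →. ℕ} {a n y : ℕ} :
    y ∈ (Nat.rec (f a) (fun k ih => ih.bind fun i => g (Nat.pair a (Nat.pair k i))) n : Part ℕ) ↔
      ∃ s, Nat.beta s 0 ∈ f a ∧
        (∀ k < n, Nat.beta s (k + 1) ∈ g (Nat.pair a (Nat.pair k (Nat.beta s k)))) ∧
        y = Nat.beta s n := by
  refine mem_natRec_iff_exists_seq.trans ⟨?_, fun ⟨s, hs⟩ => ⟨Nat.beta s, hs⟩⟩
  rintro ⟨t, ht₀, ht, rfl⟩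
  obtain ⟨s, hs⟩ := exists_beta_eq t n
  refine ⟨s, ?_, fun k hk => ?_, (hs n le_rfl).symm⟩
  · rwa [hs 0 n.zero_le]
  · rw [hs (k + 1) hk, hs k hk.le]
    exact ht k hk

theorem mem_rfind_iff {f : ℕ →. ℕ} {a y : ℕ} :
    (y ∈ Nat.rfind fun k => (fun m => decide (m = 0)) <$> f (Nat.pair a k)) ↔
      0 ∈ f (Nat.pair a y) ∧ ∀ k < y, ∃ z, z + 1 ∈ f (Nat.pair a k) := by
  refine Nat.mem_rfind.trans (and_congr (by simp) (forall₂_congr fun k _ => ?_))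
  simp only [Part.map_eq_map, Part.mem_map_iff, decide_eq_false_iff_not]
  exact ⟨fun ⟨z, hz, hz₀⟩ => ⟨z - 1, by rwa [Nat.sub_one_add_one hz₀]⟩,
    fun ⟨z, hz⟩ => ⟨z + 1, hz, z.succ_ne_zero⟩⟩

theorem mem_dioph {h : ℕ →. ℕ} (dh : Dioph {v : Vector3 ℕ 2 | v &1 ∈ h (v &0)}) {α : Type}
    {f g : (α → ℕ) → ℕ} (df : DiophFn f) (dg : DiophFn g) : Dioph {v | g v ∈ h (f v)} :=
  dioph_comp2 (S := fun x y => y ∈ h x) df dg dh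

theorem prec_dioph {f g : ℕ →. ℕ} (df : Dioph {v : Vector3 ℕ 2 | v &1 ∈ f (v &0)})
    (dg : Dioph {v : Vector3 ℕ 2 | v &1 ∈ g (v &0)}) :
    Dioph {v : Vector3 ℕ 2 | v &1 ∈ Nat.unpaired (fun a n => (Nat.rec (f a)
      (fun k ih => ih.bind fun i => g (Nat.pair a (Nat.pair k i))) n : Part ℕ)) (v &0)} := by
  have da := unpair_fst_dioph (D&0 : DiophFn fun v : Vector3 ℕ 2 => v &0)
  have dn := unpair_snd_dioph (D&0 : DiophFn fun v : Vector3 ℕ 2 => v &0)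
  have dinit := mem_dioph df (lift_dioph da) (beta_dioph last_dioph (D.0))
  have dvalue := beta_dioph (lift_dioph (α := Option (Fin2 2)) last_dioph) last_dioph
  have dnext := beta_dioph (lift_dioph (α := Option (Fin2 2)) last_dioph) (last_dioph D+ D.1)
  have dstep := ball_dioph (mem_dioph dg (pair_dioph (lift_dioph (lift_dioph da))
    (pair_dioph last_dioph dvalue)) dnext) (lift_dioph dn)
  have dlast := lift_dioph (D&1) D= beta_dioph last_dioph (lift_dioph dn)
  refine Dioph.ext (ex1_dioph (dinit.inter (dstep.inter dlast))) fun v => ?_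
  exact (mem_natRec_iff_exists_beta (f := f) (g := g) (a := (v &0).unpair.1)
    (n := (v &0).unpair.2) (y := v &1)).symm

theorem rfind_dioph {f : ℕ →. ℕ} (df : Dioph {v : Vector3 ℕ 2 | v &1 ∈ f (v &0)}) :
    Dioph {v : Vector3 ℕ 2 | v &1 ∈
      Nat.rfind fun k => (fun m => decide (m = 0)) <$> f (Nat.pair (v &0) k)} := by
  have da : DiophFn fun v : Vector3 ℕ 2 => v &0 := D&0
  have dy : DiophFn fun v : Vector3 ℕ 2 => v &1 := D&1
  have droot := mem_dioph df (pair_dioph da dy) (D.0)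
  have dpos := ex1_dioph (mem_dioph df
    (pair_dioph (lift_dioph (lift_dioph da)) (lift_dioph last_dioph)) (last_dioph D+ D.1))
  exact (droot.inter (ball_dioph dpos dy)).ext fun v => mem_rfind_iff.symm

theorem partrec_dioph {f : ℕ →. ℕ} (hf : Nat.Partrec f) :
    Dioph {v : Vector3 ℕ 2 | v &1 ∈ f (v &0)} := by
  induction hf with
  | zero => exact (D&1 D= D.0).ext fun v => Part.mem_some_iff.symm
  | succ => exact (D&1 D= D&0 D+ D.1).ext fun v => Part.mem_some_iff.symm
  | left => exact (D&1 D= unpair_fst_dioph (D&0)).ext fun v => Part.mem_some_iff.symm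
  | right => exact (D&1 D= unpair_snd_dioph (D&0)).ext fun v => Part.mem_some_iff.symm
  | @pair f g _ _ df dg =>
    refine Dioph.ext ((mem_dioph df (D&0) (unpair_fst_dioph (D&1))).inter
      (mem_dioph dg (D&0) (unpair_snd_dioph (D&1)))) fun v => ?_
    simp only [Set.mem_inter_iff, Set.mem_ofPred_eq, Seq.seq, Part.map_eq_map, Part.mem_bind_iff,
      Part.mem_map_iff]
    constructor
    · rintro ⟨hf, hg⟩
      exact ⟨_, ⟨_, hf, rfl⟩, _, hg, Nat.pair_unpair _⟩
    · rintro ⟨_, ⟨x, hf, rfl⟩, y, hg, hxy⟩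
      rw [← hxy, Nat.unpair_pair]
      exact ⟨hf, hg⟩
  | @comp f g _ _ df dg =>
    refine Dioph.ext (ex1_dioph ((mem_dioph dg (lift_dioph (D&0)) last_dioph).inter
      (mem_dioph df last_dioph (lift_dioph (D&1))))) fun v => ?_
    exact (Part.mem_bind_iff (f := g (v &0)) (g := f)).symm
  | prec _ _ df dg => exact prec_dioph df dg
  | rfind _ df => exact rfind_dioph df

theorem dioph_of_rePred {S : ℕ → Prop} (hS : REPred S) : Dioph {v : Unit → ℕ | S (v ())} := by
  let f (n : ℕ) : Part ℕ := (Part.assert (S n) fun _ => Part.some ()).map fun _ => 0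
  have hf : Nat.Partrec f := Partrec.nat_iff.1 (Partrec.map hS (Computable.const 0).to₂)
  refine (ex1_dioph (mem_dioph (partrec_dioph hf) (proj_dioph (some ())) last_dioph)).ext
    fun v => ?_
  have hdom : (f (v ())).Dom ↔ S (v ()) := ⟨fun h => h.1, fun h => ⟨h, trivial⟩⟩
  exact Part.dom_iff_mem.symm.trans hdom

theorem exists_rePred_not_computablePred : ∃ S : ℕ → Prop, REPred S ∧ ¬ ComputablePred S := by
  let S (n : ℕ) : Prop := ((Denumerable.ofNat Nat.Partrec.Code n).eval 0).Dom
  refine ⟨S, (ComputablePred.halting_problem_re 0).comp (Computable.ofNat _), fun hS => ?_⟩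
  refine ComputablePred.halting_problem 0 (ComputablePred.computable_of_manyOneReducible
    ⟨Encodable.encode, Computable.encode, fun c => ?_⟩ hS)
  simp only [S, Denumerable.ofNat_encode]

theorem exists_mvPolynomial_of_dioph {S : ℕ → Prop} (hS : Dioph {v : Unit → ℕ | S (v ())}) :
    ∃ (σ : Type) (o : σ) (P : MvPolynomial σ ℤ),
      ∀ n : ℕ, S n ↔ ∃ z : σ → ℤ, z o = n ∧ P.eval z = 0 := by
  obtain ⟨β, p, hp⟩ := hS
  obtain ⟨P, hP⟩ := exists_mvPolynomial_eval_eq p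
  -- every dummy over `ℕ` is replaced by a sum of four squares over `ℤ`
  let τ : Unit ⊕ β → MvPolynomial (Option (β × Fin 4)) ℤ :=
    Sum.elim (fun _ => MvPolynomial.X none) fun b => ∑ k, MvPolynomial.X (some (b, k)) ^ 2
  have heval (z : Option (β × Fin 4) → ℤ) (v : Unit ⊕ β → ℕ)
      (h : ∀ i, (τ i).eval z = v i) : (MvPolynomial.bind₁ τ P).eval z = p v := by
    rw [← hP, MvPolynomial.eval, MvPolynomial.eval₂Hom_bind₁]
    congr! 2
    exact funext h
  refine ⟨_, none, MvPolynomial.bind₁ τ P, fun n => (hp fun _ => n).trans ⟨?_, ?_⟩⟩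
  · rintro ⟨t, ht⟩
    choose a b c d habcd using fun i => Nat.sum_four_squares (t i)
    refine ⟨Option.elim' n fun i => (![a i.1, b i.1, c i.1, d i.1] i.2 : ℕ), rfl,
      (heval _ _ ?_).trans ht⟩
    rintro (_ | i)
    · simp [τ]
    · simp [τ, ← habcd, Fin.sum_univ_four]
  · rintro ⟨z, hz, hzP⟩
    refine ⟨fun b => (∑ k, z (some (b, k)) ^ 2).toNat, (heval z _ ?_).symm.trans hzP⟩
    rintro (_ | b)
    · simpa [τ] using hz
    · simp [τ, Finset.sum_nonneg fun k _ => sq_nonneg (z (some (b, k)))]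

end Diophantine

/-! ### Linear systems with computable right-hand sides -/

/-- A finite system of `ℤ`-linear equations on an abelian group whose right-hand sides depend
computably on a parameter. -/
def IsLinearSystem {E : Type} [AddCommGroup E] (P : ℕ → E → Prop) : Prop :=
  ∃ (Q : Type) (_ : Finite Q) (F : Q → E →+ ℤ) (b : Q → ℕ → ℤ),
    (∀ q, Computable (b q)) ∧ ∀ n w, P n w ↔ ∀ q, F q w = b q n

namespace IsLinearSystem

variable {E E' : Type} [AddCommGroup E] [AddCommGroup E']

theorem of_eq (F : E →+ ℤ) {b : ℕ → ℤ} (hb : Computable b) :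
    IsLinearSystem fun n w => F w = b n :=
  ⟨Unit, inferInstance, fun _ => F, fun _ => b, fun _ => hb, by simp⟩

theorem forall_mem {ι : Type} [Finite ι] {P : ι → ℕ → E → Prop} (h : ∀ i, IsLinearSystem (P i)) :
    IsLinearSystem fun n w => ∀ i, P i n w := by
  choose Q _ F b hb hP using h
  exact ⟨Σ i, Q i, inferInstance, fun q => F q.1 q.2, fun q => b q.1 q.2, fun q => hb q.1 q.2,
    fun n w => by simp [hP, Sigma.forall]⟩

theorem and {P P' : ℕ → E → Prop} (h : IsLinearSystem P) (h' : IsLinearSystem P') :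
    IsLinearSystem fun n w => P n w ∧ P' n w := by
  obtain ⟨Q, _, F, b, hb, hP⟩ := h
  obtain ⟨Q', _, F', b', hb', hP'⟩ := h'
  refine ⟨Q ⊕ Q', inferInstance, Sum.elim F F', Sum.elim b b', Sum.forall.2 ⟨hb, hb'⟩, ?_⟩
  simp [hP, hP', Sum.forall]

theorem comp {P : ℕ → E → Prop} (h : IsLinearSystem P) (L : E' →+ E) :
    IsLinearSystem fun n w => P n (L w) := by
  obtain ⟨Q, _, F, b, hb, hP⟩ := h
  exact ⟨Q, inferInstance, fun q => (F q).comp L, b, hb, fun n w => hP n (L w)⟩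

end IsLinearSystem

theorem computable_natCast_int : Computable fun n : ℕ => (n : ℤ) := by
  refine Computable.encode_iff.1 (Computable.of_eq (Primrec.nat_double).to_comp ?_)
  exact fun n => rfl

theorem computable_two_mul_int : Computable fun z : ℤ => 2 * z := by
  refine Computable.encode_iff.1 ?_
  have h : Primrec fun z : ℤ => 2 * Encodable.encode z + Encodable.encode z % 2 :=
    Primrec.nat_add.comp (Primrec.nat_double.comp Primrec.encode)
      (Primrec.nat_mod.comp Primrec.encode (Primrec.const 2))
  refine h.to_comp.of_eq fun z => ?_
  rcases z with n | n
  · change 2 * (2 * n) + (2 * n) % 2 = 2 * (2 * n)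
    omega
  · change 2 * (2 * n + 1) + (2 * n + 1) % 2 = 2 * (2 * n + 1) + 1
    omega

theorem computable_fin_fun {m : ℕ} {b : Fin m → ℕ → ℤ} (hb : ∀ q, Computable (b q)) :
    Computable fun n q => b q n :=
  ((Primrec.vector_get'.to_comp).comp (Computable.vector_ofFn hb)).of_eq
    fun n => by funext i; simp

/-! ### Polynomial equations as linear equations in products of monomials -/

theorem exists_forall_eq_prod_pow {σ R : Type*} [CommMonoid R] {D : σ →₀ ℕ} {ζ : {m // m ≤ D} → R}
    (hzero : ζ ⟨0, zero_le⟩ = 1)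
    (hadd : ∀ m m' (h : m + m' ≤ D),
      ζ ⟨m + m', h⟩ = ζ ⟨m, le_self_add.trans h⟩ * ζ ⟨m', le_add_self.trans h⟩) :
    ∃ z : σ → R, ∀ m : {m // m ≤ D}, ζ m = m.1.prod fun i k => z i ^ k := by
  classical
  let z i := if h : Finsupp.single i 1 ≤ D then ζ ⟨_, h⟩ else 1
  refine ⟨z, fun ⟨m, hm⟩ => ?_⟩
  induction m using Finsupp.induction_linear with
  | zero => simpa using hzero
  | add m m' ihm ihm' =>
    rw [hadd, ihm, ihm', Finsupp.prod_add_index' (by simp) fun i => pow_add (z i)]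
  | single i k =>
    simp only [Finsupp.prod_single_index, pow_zero]
    induction k with
    | zero => simpa using hzero
    | succ k ih =>
      have hsingle : Finsupp.single i (k + 1) = Finsupp.single i k + Finsupp.single i 1 :=
        Finsupp.single_add i k 1
      have hone : Finsupp.single i 1 ≤ D := le_add_self.trans (hsingle ▸ hm)
      simp only [hsingle, hadd, ih, pow_succ]
      simp only [z, dif_pos hone]

theorem eval_eq_sum_coeff_mul_prod {σ R : Type*} [CommSemiring R] {P : MvPolynomial σ R}
    {D : σ →₀ ℕ} [Fintype {m // m ≤ D}] (hD : ∀ m ∈ P.support, m ≤ D) (z : σ → R) :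
    P.eval z = ∑ m : {m // m ≤ D}, P.coeff m * m.1.prod fun i k => z i ^ k := by
  classical
  rw [MvPolynomial.eval_eq, Finset.sum_subset (fun m hm => Finset.mem_Iic.2 (hD m hm))]
  · exact Finset.sum_subtype _ (fun m => Finset.mem_Iic) _
  · intro m _ hm
    rw [MvPolynomial.notMem_support_iff.1 hm, zero_mul]

theorem exists_isLinearSystem_vecMulVec {σ : Type} (P : MvPolynomial σ ℤ) (o : σ) :
    ∃ (I : Type) (_ : Finite I) (e : I) (L : ℕ → Matrix I I ℤ → Prop), IsLinearSystem L ∧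
      ∀ n : ℕ, (∃ z : σ → ℤ, z o = n ∧ P.eval z = 0) ↔
        ∃ ζ : I → ℤ, ζ e = 1 ∧ L n (Matrix.vecMulVec ζ ζ) := by
  classical
  let D : σ →₀ ℕ := P.support.sup id ⊔ Finsupp.single o 1
  have hD : ∀ m ∈ P.support, m ≤ D := fun m hm => (Finset.le_sup (f := id) hm).trans le_sup_left
  let I := {m // m ≤ D}
  have : Fintype I := Fintype.subtype (Finset.Iic D) fun m => Finset.mem_Iic
  let e : I := ⟨0, zero_le⟩
  let x : I := ⟨Finsupp.single o 1, le_sup_right⟩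
  let J := {p : I × I // p.1.1 + p.2.1 ≤ D}
  let prod (p : J) : I := ⟨p.1.1 + p.1.2, p.2⟩
  let entry (p q : I) : Matrix I I ℤ →+ ℤ := Matrix.entryAddMonoidHom ℤ p q
  -- the linear equations say that `ζ` is the vector of monomials `z ^ m`, `m ≤ D`, at a zero of `P`
  refine ⟨I, inferInstance, e, fun n M => M x e = n ∧
      (∀ p : J, M (prod p) e = M p.1.1 p.1.2) ∧ ∑ m, P.coeff m.1 * M m e = 0,
    .and ?_ (.and (.forall_mem fun p => ?_) ?_), fun n => ⟨?_, ?_⟩⟩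
  · exact .of_eq (entry x e) computable_natCast_int
  · simpa [entry, sub_eq_zero] using
      IsLinearSystem.of_eq (entry (prod p) e - entry p.1.1 p.1.2) (Computable.const 0)
  · simpa [entry] using
      IsLinearSystem.of_eq (∑ m, P.coeff m.1 • entry m e) (Computable.const 0)
  · rintro ⟨z, hz, hP⟩
    refine ⟨fun m => m.1.prod fun i k => z i ^ k, by simp [e], ?_, fun p => ?_, ?_⟩
    · simp [Matrix.vecMulVec_apply, x, e, hz]
    · simp [Matrix.vecMulVec_apply, e, prod, Finsupp.prod_add_index', pow_add]
    · simp [Matrix.vecMulVec_apply, e, I, ← eval_eq_sum_coeff_mul_prod hD, hP]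
  · rintro ⟨ζ, hζ, hx, hprod, hP⟩
    simp only [Matrix.vecMulVec_apply, hζ, mul_one] at hx hprod hP
    obtain ⟨z, hz⟩ := exists_forall_eq_prod_pow hζ fun m m' h =>
      hprod ⟨(⟨m, le_self_add.trans h⟩, ⟨m', le_add_self.trans h⟩), h⟩
    refine ⟨z, ?_, ?_⟩
    · rw [← hx, hz]
      simp [x]
    · simpa only [eval_eq_sum_coeff_mul_prod hD, ← hz] using hP

/-! ### Skew-symmetric bilinear systems -/

section Wedge

open Matrix Sum

variable {R V I : Type*} [CommRing R]

/-- The matrix of the exterior product `x ∧ y`: its entries are the `2 × 2` minors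
`x i * y j - y i * x j`. -/
def wedge (x y : V → R) : Matrix V V R :=
  vecMulVec x y - vecMulVec y x

theorem wedge_apply (x y : V → R) (i j : V) : wedge x y i j = x i * y j - y i * x j :=
  rfl

theorem wedge_swap (x y : V → R) (i j : V) : wedge x y j i = -wedge x y i j := by
  simp only [wedge_apply]
  ring

theorem wedge_self (x y : V → R) (i : V) : wedge x y i i = 0 := by
  simp only [wedge_apply]
  ring

theorem wedge_plucker (x y : V → R) (i j k l : V) :
    wedge x y i j * wedge x y k l =
      wedge x y i k * wedge x y j l - wedge x y i l * wedge x y j k := by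
  simp only [wedge_apply]
  ring

-- By the Plücker relation, the linear equations on the right force the off-diagonal block of
-- `x ∧ y` to be symmetric of rank one.
theorem exists_vecMulVec_self_iff_exists_wedge (o : I) {P : Matrix I I R → Prop} :
    (∃ z, z o = 1 ∧ P (vecMulVec z z)) ↔ ∃ x y : I ⊕ I → R,
      wedge x y (inl o) (inr o) = 1 ∧
      (∀ i, wedge x y (inl o) (inl i) = 0 ∧
        wedge x y (inl o) (inr i) = wedge x y (inl i) (inr o)) ∧
      P (wedge x y).toBlocks₁₂ := by
  constructor
  · rintro ⟨z, hz, hP⟩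
    refine ⟨Sum.elim z 0, Sum.elim 0 z, by simp [wedge_apply, hz], fun i => ?_, ?_⟩
    · simp [wedge_apply, mul_comm]
    · convert hP
      ext i j
      simp [toBlocks₁₂, wedge_apply, vecMulVec_apply]
  · rintro ⟨x, y, hone, h, hP⟩
    refine ⟨fun i => wedge x y (inl o) (inr i), hone, ?_⟩
    convert hP
    ext i j
    have hplucker := wedge_plucker x y (inl o) (inr o) (inl i) (inr j)
    rw [hone, (h i).1, wedge_swap _ _ (inl i) (inr o), ← (h i).2] at hplucker
    simp only [toBlocks₁₂, of_apply, vecMulVec_apply]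
    linear_combination -hplucker

end Wedge

theorem exists_isLinearSystem_wedge {I : Type} [Finite I] (o : I) {L : ℕ → Matrix I I ℤ → Prop}
    (hL : IsLinearSystem L) :
    ∃ (V : Type) (_ : Finite V) (P : ℕ → Matrix V V ℤ → Prop), IsLinearSystem P ∧
      ∀ n, (∃ z, z o = 1 ∧ L n (Matrix.vecMulVec z z)) ↔ ∃ x y : V → ℤ, P n (wedge x y) := by
  let entry (p q : I ⊕ I) : Matrix (I ⊕ I) (I ⊕ I) ℤ →+ ℤ := Matrix.entryAddMonoidHom ℤ p q
  refine ⟨I ⊕ I, inferInstance, fun n W => W (.inl o) (.inr o) = 1 ∧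
      (∀ i, W (.inl o) (.inl i) = 0 ∧ W (.inl o) (.inr i) = W (.inl i) (.inr o)) ∧
      L n W.toBlocks₁₂,
    .and ?_ (.and (.forall_mem fun i => .and ?_ ?_) ?_),
    fun n => exists_vecMulVec_self_iff_exists_wedge o⟩
  · exact .of_eq (entry (.inl o) (.inr o)) (Computable.const 1)
  · exact .of_eq (entry (.inl o) (.inl i)) (Computable.const 0)
  · simpa [entry, sub_eq_zero] using IsLinearSystem.of_eq
      (entry (.inl o) (.inr i) - entry (.inl i) (.inr o)) (Computable.const 0)
  · exact hL.comp (AddMonoidHom.mk' Matrix.toBlocks₁₂ fun _ _ => rfl)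

theorem addMonoidHom_apply_eq_sum_single {V : Type*} [Fintype V] [DecidableEq V]
    (F : Matrix V V ℤ →+ ℤ) (W : Matrix V V ℤ) :
    F W = ∑ i, ∑ j, F (Matrix.single i j 1) * W i j := by
  have hsingle (i j : V) : Matrix.single i j (W i j) = W i j • Matrix.single i j (1 : ℤ) := by
    simp
  conv_lhs => rw [Matrix.matrix_eq_sum_single W]
  simp only [hsingle, map_sum, map_zsmul, smul_eq_mul, mul_comm]

theorem sum_sum_lt_sub_mul_eq_sum_sum_mul {V R : Type*} [Fintype V] [LinearOrder V] [CommRing R]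
    (A W : Matrix V V R) (hself : ∀ i, W i i = 0) (hswap : ∀ i j, W j i = -W i j) :
    ∑ i, ∑ j, (if i < j then (A i j - A j i) * W i j else 0) = ∑ i, ∑ j, A i j * W i j := by
  have hsplit (i j : V) : A i j * W i j =
      (if i < j then A i j * W i j else 0) + if j < i then A i j * W i j else 0 := by
    rcases lt_trichotomy i j with h | rfl | h
    · simp [h, h.not_gt]
    · simp [hself]
    · simp [h, h.not_gt]
  rw [Finset.sum_congr rfl fun i _ => Finset.sum_congr rfl fun j _ => hsplit i j]
  simp only [Finset.sum_add_distrib]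
  rw [Finset.sum_comm (f := fun i j => if j < i then A i j * W i j else 0)]
  simp only [← Finset.sum_add_distrib]
  refine Finset.sum_congr rfl fun i _ => Finset.sum_congr rfl fun j _ => ?_
  split_ifs
  · rw [hswap i j]
    ring
  · rw [add_zero]

theorem exists_skew'_iff_exists_wedge {V : Type} [Finite V] {P : ℕ → Matrix V V ℤ → Prop}
    (hP : IsLinearSystem P) :
    ∃ (m s : ℕ) (a : Fin m → Fin s → Fin s → ℤ) (b : ℕ → Fin m → ℤ), Computable b ∧
      ∀ n, SKEW' m s a (b n) ↔ ∃ x y : V → ℤ, P n (wedge x y) := by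
  obtain ⟨s, ⟨e⟩⟩ := Finite.exists_equiv_fin V
  obtain ⟨Q, _, F, b, hb, hF⟩ :=
    hP.comp (AddMonoidHom.mk' (fun W : Matrix (Fin s) (Fin s) ℤ => W.submatrix e e) fun _ _ => rfl)
  obtain ⟨m, ⟨f⟩⟩ := Finite.exists_equiv_fin Q
  let A (q : Q) (i j : Fin s) : ℤ := F q (Matrix.single i j 1)
  have hsum (x y : Fin s → ℤ) (q : Q) :
      (∑ i, ∑ j, if i < j then 2 * (A q i j - A q j i) * (x i * y j - x j * y i) else 0) =
        2 * F q (wedge x y) := by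
    have hskew :=
      sum_sum_lt_sub_mul_eq_sum_sum_mul (A q) (wedge x y) (wedge_self x y) (wedge_swap x y)
    rw [addMonoidHom_apply_eq_sum_single, ← hskew]
    simp only [Finset.mul_sum, mul_ite, mul_zero, mul_assoc, wedge_apply, mul_comm (y _)]
  refine ⟨m, s, fun i j k => A (f.symm i) j k - A (f.symm i) k j, fun n i => 2 * b (f.symm i) n,
    computable_fin_fun fun i => computable_two_mul_int.comp (hb _), fun n => ?_⟩
  calc
    _ ↔ ∃ x y : Fin s → ℤ, P n (wedge (x ∘ e) (y ∘ e)) := by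
      refine exists₂_congr fun x y => Iff.trans ?_ (hF n (wedge x y)).symm
      simp [hsum, f.symm.forall_congr_left]
    _ ↔ _ := by
      have he : Function.Surjective fun x : Fin s → ℤ => x ∘ e := e.injective.surjective_comp_right
      simp only [he.exists]

end SkewUndecidability

open SkewUndecidability in
theorem skew'_undecidable_general :
    ∃ (m s : ℕ) (a : Fin m → Fin s → Fin s → ℤ),
      ¬ ComputablePred fun b : Fin m → ℤ => SKEW' m s a b := by
  obtain ⟨S, hre, hS⟩ := exists_rePred_not_computablePred
  obtain ⟨σ, o, P, hP⟩ := exists_mvPolynomial_of_dioph (dioph_of_rePred hre)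
  obtain ⟨I, _, e, L, hL, hLP⟩ := exists_isLinearSystem_vecMulVec P o
  obtain ⟨V, _, K, hK, hKL⟩ := exists_isLinearSystem_wedge e hL
  obtain ⟨m, s, a, b, hb, hab⟩ := exists_skew'_iff_exists_wedge hK
  have hreduce : S ≤₀ fun b : Fin m → ℤ => SKEW' m s a b :=
    ⟨b, hb, fun n => by rw [hP, hLP, hKL, ← hab]⟩
  exact ⟨m, s, a, fun h => hS (ComputablePred.computable_of_manyOneReducible hreduce h)⟩

/-- There exist fixed `m, s` such that the predicate (SKEW') on pairs of integer arrays
`(a, b)` is not computable. -/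
theorem skew'_undecidable :
    ∃ m s : ℕ, ¬ ComputablePred
      (fun p : (Fin m → Fin s → Fin s → ℤ) × (Fin m → ℤ) => SKEW' m s p.1 p.2) := by
  obtain ⟨m, s, a, ha⟩ := skew'_undecidable_general
  exact ⟨m, s, fun h => ha (ComputablePred.computable_of_manyOneReducible
    ⟨fun b => (a, b), .pair (.const a) .id, fun _ => Iff.rfl⟩ h)⟩
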